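/- Solving cubics via RNM: Let p(z) = a₃z³ + a₂z² + a₁z + a₀ be a cubic polynomial with complex coefficients (a₃ ≠ 0), and let c be a critical point of p (p'(c) = 0) such that |p(c)| ≤ |p(w)| for every critical point w of p. Then the RNM orbit of c converges to a root of p, i.e., there exists θ* ∈ ℂ with p(θ*) = 0 such that the RNM iterates starting at c converge to θ*. -/

import Mathlib

open Polynomial Filter Topology
open scoped Classical

noncomputable section

/-- The `j`-th derivative of `p`, evaluated at `z`. -/
def dEval (p : Polynomial ℂ) (j : ℕ) (z : ℂ) : ℂ :=
  (Polynomial.derivative^[j] p).eval z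

/-- The index `k(z) = min {j ≥ 1 : p^{(j)}(z) ≠ 0}`. -/
def kIndex (p : Polynomial ℂ) (z : ℂ) : ℕ :=
  sInf {j : ℕ | 1 ≤ j ∧ dEval p j z ≠ 0}

/-- `A(z) = max {|p^{(j)}(z)|/j! : j = 0, …, n}`, where `n` is the degree of `p`. -/
def Amax (p : Polynomial ℂ) (z : ℂ) : ℝ :=
  (Finset.range (p.natDegree + 1)).sup' Finset.nonempty_range_add_one
    (fun j => ‖dEval p j z‖ / (Nat.factorial j))

/-- `u_m = (1/m!) · p(z) · conj(p^{(m)}(z))`. -/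
def uPar (p : Polynomial ℂ) (m : ℕ) (z : ℂ) : ℂ :=
  (1 / (Nat.factorial m : ℂ)) * p.eval z * (starRingEnd ℂ) (dEval p m z)

/-- `γ = 2 · Re(u_m^(m-1))`. -/
def gammaPar (p : Polynomial ℂ) (m : ℕ) (z : ℂ) : ℝ :=
  2 * ((uPar p m z) ^ (m - 1)).re

/-- `δ = -2 · Im(u_m^(m-1))`. -/
def deltaPar (p : Polynomial ℂ) (m : ℕ) (z : ℂ) : ℝ :=
  -2 * ((uPar p m z) ^ (m - 1)).im

/-- `c_m = max {|γ|, |δ|}`. -/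
def cPar (p : Polynomial ℂ) (m : ℕ) (z : ℂ) : ℝ :=
  max |gammaPar p m z| |deltaPar p m z|

/-- The angle `θ`: `0` if `c = |γ|, γ < 0`; `π/m` if `c = |γ|, γ > 0`;
`π/(2m)` if `c = |δ|, δ < 0`; `3π/(2m)` if `c = |δ|, δ > 0`. -/
def thetaPar (p : Polynomial ℂ) (m : ℕ) (z : ℂ) : ℝ :=
  if cPar p m z = |gammaPar p m z| then
    if gammaPar p m z < 0 then 0 else Real.pi / m
  else
    if deltaPar p m z < 0 then Real.pi / (2 * m) else 3 * Real.pi / (2 * m)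

/-- `C_m = c_m · |u_m|^(2-m) / (6 · A(z)²)`. -/
def CPar (p : Polynomial ℂ) (m : ℕ) (z : ℂ) : ℝ :=
  cPar p m z * ‖uPar p m z‖ ^ ((2 : ℤ) - (m : ℤ)) / (6 * (Amax p z) ^ 2)

/-- The Robust Newton iterate with prescribed index `m`:
`z + (C_m/3) · (u_m/|u_m|) · e^(iθ)`. -/
def rniWith (p : Polynomial ℂ) (m : ℕ) (z : ℂ) : ℂ :=
  z + (↑(CPar p m z / 3) : ℂ) * (uPar p m z / (↑(‖uPar p m z‖) : ℂ)) *
    Complex.exp ((↑(thetaPar p m z) : ℂ) * Complex.I)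

/-- The Robust Newton iterate `N̂_p(z)`. -/
def RN (p : Polynomial ℂ) (z : ℂ) : ℂ := rniWith p (kIndex p z) z

/-- The RNM orbit of the seed `z₀`: `z_{t+1} = N̂_p(z_t)` when `p(z_t) ≠ 0`,
and `z_{t+1} = z_t` when `p(z_t) = 0`. -/
def rnmOrbit (p : Polynomial ℂ) (z₀ : ℂ) : ℕ → ℂ
  | 0 => z₀
  | t + 1 =>
      if p.eval (rnmOrbit p z₀ t) = 0 then rnmOrbit p z₀ t
      else RN p (rnmOrbit p z₀ t)

lemma theta_re (p : Polynomial ℂ) (m : ℕ) (hm : 1 ≤ m) (z : ℂ) (hu : uPar p m z ≠ 0) :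
    ((uPar p m z) ^ (m - 1) * (Complex.exp ((↑(thetaPar p m z) : ℂ) * Complex.I)) ^ m).re
      = - cPar p m z / 2 := by
  have hm0 : (m : ℂ) ≠ 0 := by exact_mod_cast (by omega : m ≠ 0)
  rw [← Complex.exp_nat_mul]
  have hx : (uPar p m z) ^ (m - 1) ≠ 0 := pow_ne_zero _ hu
  unfold thetaPar cPar
  have hg : gammaPar p m z = 2 * ((uPar p m z) ^ (m - 1)).re := rfl
  have hd : deltaPar p m z = -2 * ((uPar p m z) ^ (m - 1)).im := rfl
  generalize gammaPar p m z = g at *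
  generalize deltaPar p m z = d at *
  generalize (uPar p m z) ^ (m - 1) = x at *
  have e1 : (m : ℂ) * (((Real.pi / m : ℝ) : ℂ) * Complex.I) = Real.pi * Complex.I := by
    push_cast; field_simp
  have e2 : (m : ℂ) * (((Real.pi / (2 * m) : ℝ) : ℂ) * Complex.I)
      = Real.pi / 2 * Complex.I := by
    push_cast; field_simp
  have e3 : (m : ℂ) * (((3 * Real.pi / (2 * m) : ℝ) : ℂ) * Complex.I)
      = Real.pi * Complex.I + Real.pi / 2 * Complex.I := by
    push_cast; field_simp; ring
  split_ifs with h1 h2 h3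
  · rw [h1, abs_of_neg h2]
    simp; linarith
  · rw [h1, abs_of_nonneg (not_lt.mp h2), e1, Complex.exp_pi_mul_I]
    simp; linarith
  · have h4 : max |g| |d| = |d| := by
      rcases max_choice |g| |d| with h | h
      · exact absurd h h1
      · exact h
    rw [h4, abs_of_neg h3, e2, Complex.exp_pi_div_two_mul_I]
    simp; linarith
  · have h4 : max |g| |d| = |d| := by
      rcases max_choice |g| |d| with h | h
      · exact absurd h h1
      · exact h
    rw [h4, abs_of_nonneg (not_lt.mp h3), e3, Complex.exp_add, Complex.exp_pi_mul_I,
      Complex.exp_pi_div_two_mul_I]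
    simp; linarith

lemma c_bounds (p : Polynomial ℂ) (m : ℕ) (z : ℂ) :
    ‖uPar p m z‖ ^ (m - 1) ≤ cPar p m z ∧ cPar p m z ≤ 2 * ‖uPar p m z‖ ^ (m - 1) := by
  rw [← norm_pow]
  unfold cPar gammaPar deltaPar
  generalize (uPar p m z) ^ (m - 1) = x
  have h1 := Complex.norm_le_abs_re_add_abs_im x
  have h2 := Complex.abs_re_le_norm x
  have h3 := Complex.abs_im_le_norm x
  rw [abs_mul, abs_mul]
  norm_num
  constructor
  · rcases le_total |x.re| |x.im| with h | h
    · right; linarith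
    · left; linarith
  · exact ⟨h2, h3⟩

set_option maxHeartbeats 1000000 in
lemma descent (P b e R : ℂ) (A c : ℝ) (n : ℕ) (hP : P ≠ 0) (hb : b ≠ 0)
    (hPA : ‖P‖ ≤ A) (hbA : ‖b‖ ≤ A) (u : ℂ) (hu : u = P * (starRingEnd ℂ) b)
    (he : ‖e‖ = 1) (hre : (u ^ n * e ^ (n+1)).re = - c / 2)
    (hc1 : ‖u‖ ^ n ≤ c) (hc2 : c ≤ 2 * ‖u‖ ^ n) (r : ℝ)
    (hr : r = c * (‖u‖ ^ ((2 : ℤ) - ((n + 1 : ℕ) : ℤ))) / (6 * A ^ 2) / 3)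
    (h : ℂ) (hh : h = r * (u / (‖u‖ : ℂ)) * e)
    (hR : ‖R‖ ≤ A * (‖h‖ ^ (n+2) + ‖h‖ ^ (n+3))) :
    ‖h‖ = r ∧ ‖u‖ / (18 * A ^ 2) ≤ r ∧ r ≤ ‖u‖ / (9 * A ^ 2) ∧
    ‖P + b * h ^ (n+1) + R‖ ≤ ‖P‖ * (1 - r ^ (n+1) * ‖u‖ / (4 * ‖P‖ ^ 2)) := by
  have hP0 : 0 < ‖P‖ := norm_pos_iff.mpr hP
  have hb0 : 0 < ‖b‖ := norm_pos_iff.mpr hb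
  have hA : 0 < A := lt_of_lt_of_le hP0 hPA
  have hun : ‖u‖ = ‖P‖ * ‖b‖ := by rw [hu]; simp
  have hu0 : 0 < ‖u‖ := by rw [hun]; positivity
  obtain ⟨ρ, hρ⟩ : ∃ ρ, ρ = ‖u‖ := ⟨_, rfl⟩
  obtain ⟨κ, hκ⟩ : ∃ κ, κ = c / ρ ^ n := ⟨_, rfl⟩
  rw [← hρ] at hun hu0 hc1 hc2 hr hh ⊢
  have hρn : 0 < ρ ^ n := by positivity
  have hcκ : c = κ * ρ ^ n := by rw [hκ]; field_simp
  have hκ1 : 1 ≤ κ := by rw [hκ, le_div_iff₀ hρn]; linarith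
  have hκ2 : κ ≤ 2 := by rw [hκ, div_le_iff₀ hρn]; linarith
  have hr' : r = κ * ρ / (18 * A ^ 2) := by
    rw [hr, hcκ, zpow_sub₀ hu0.ne', zpow_natCast, pow_succ]
    have : ρ ^ (2:ℤ) = ρ ^ 2 := by norm_cast
    rw [this]
    field_simp
    norm_num
  have hr0 : 0 < r := by rw [hr']; positivity
  have hρC : (ρ : ℂ) ≠ 0 := by exact_mod_cast hu0.ne'
  have hv : ‖u / (ρ : ℂ)‖ = 1 := by
    rw [norm_div, ← hρ, Complex.norm_real, Real.norm_of_nonneg hu0.le, div_self hu0.ne']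
  have hhn : ‖h‖ = r := by
    rw [hh, norm_mul, norm_mul, hv, he, Complex.norm_real, Real.norm_of_nonneg hr0.le]; ring
  have hl : ρ / (18 * A ^ 2) ≤ r := by
    rw [hr']; gcongr; nlinarith
  have hup : r ≤ ρ / (9 * A ^ 2) := by
    rw [hr', div_le_div_iff₀ (by positivity) (by positivity)]
    have : 0 < ρ * A ^ 2 := by positivity
    nlinarith
  refine ⟨hhn, hl, hup, ?_⟩
  obtain ⟨σ, hσ⟩ : ∃ σ, σ = r ^ (n+1) * ρ / ‖P‖ ^ 2 := ⟨_, rfl⟩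
  obtain ⟨ω, hω⟩ : ∃ ω, ω = u ^ n * e ^ (n+1) / (ρ : ℂ) ^ n := ⟨_, rfl⟩
  have hωn : ‖ω‖ = 1 := by
    rw [hω, norm_div, norm_mul, norm_pow, norm_pow, norm_pow, he, ← hρ, Complex.norm_real,
      Real.norm_of_nonneg hu0.le]
    field_simp; simp
  have hωre : ω.re ≤ -1/2 := by
    have : ω.re = - κ / 2 := by
      rw [hω, ← Complex.ofReal_pow, Complex.div_ofReal_re, hre, hcκ]; field_simp
    linarith
  have hρA : ρ ≤ ‖P‖ * A := by rw [hun]; gcongr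
  have hrA : r ≤ ‖P‖ / (9 * A) := by
    refine hup.trans ?_
    rw [div_le_div_iff₀ (by positivity) (by positivity)]
    nlinarith [mul_le_mul_of_nonneg_right hρA hA.le]
  have hr9 : r ≤ 1 / 9 := by
    refine hrA.trans ?_
    rw [div_le_div_iff₀ (by positivity) (by positivity)]
    linarith
  have hσ0 : 0 < σ := by rw [hσ]; positivity
  have hσ9 : σ ≤ 1 / 9 := by
    have h1 : r ^ (n+1) ≤ r := by
      rw [pow_succ]
      have : r ^ n ≤ 1 := pow_le_one₀ hr0.le (by linarith)
      nlinarith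
    rw [hσ, div_le_iff₀ (by positivity)]
    calc r ^ (n+1) * ρ ≤ (‖P‖ / (9 * A)) * (‖P‖ * A) := by
          apply mul_le_mul (h1.trans hrA) hρA hu0.le (by positivity)
      _ = 1 / 9 * ‖P‖ ^ 2 := by field_simp
  have hkey : P + b * h ^ (n+1) = P * (1 + σ * ω) := by
    have hPC : (‖P‖ : ℂ) ≠ 0 := by exact_mod_cast hP0.ne'
    have h1 : P * (starRingEnd ℂ) P = (‖P‖ : ℂ) ^ 2 := Complex.mul_conj' P
    have h2 : u * (starRingEnd ℂ) u = (ρ : ℂ) ^ 2 := by rw [hρ]; exact Complex.mul_conj' u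
    have h3 : (starRingEnd ℂ) u = (starRingEnd ℂ) P * b := by rw [hu]; simp
    have h4 : b * u * (‖P‖ : ℂ) ^ 2 = P * (ρ : ℂ) ^ 2 := by
      rw [← h1, ← h2, h3]; ring
    have h5 : b * u = P * (ρ : ℂ) ^ 2 / (‖P‖ : ℂ) ^ 2 := by
      rw [eq_div_iff (by positivity)]; exact h4
    rw [mul_add, mul_one]
    congr 1
    rw [hh, hσ, hω]
    push_cast
    calc b * (r * (u / ρ) * e) ^ (n+1) = (b * u) * (r ^ (n+1) * u ^ n * e ^ (n+1) / ρ ^ (n+1)) := by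
          rw [mul_pow, mul_pow, div_pow]; ring
      _ = _ := by rw [h5]; field_simp; ring
  have hR2 : ‖R‖ ≤ ‖P‖ * (10 / 81 * σ) := by
    refine hR.trans ?_
    rw [hhn]
    have h1 : A * r ≤ ρ / (9 * ‖P‖) := by
      calc A * r ≤ A * (ρ / (9 * A ^ 2)) := by gcongr
        _ = ρ / (9 * A) := by field_simp
        _ ≤ ρ / (9 * ‖P‖) := by gcongr
    calc A * (r ^ (n+2) + r ^ (n+3)) = r ^ (n+1) * (A * r) * (1 + r) := by ring
      _ ≤ r ^ (n+1) * (ρ / (9 * ‖P‖)) * (1 + 1/9) := by gcongr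
      _ = _ := by rw [hσ]; field_simp; ring
  have hsq : ‖1 + (σ : ℂ) * ω‖ ≤ 1 - 4 / 9 * σ := by
    apply (pow_le_pow_iff_left₀ (norm_nonneg _) (by linarith) two_ne_zero).mp
    have : ‖1 + (σ : ℂ) * ω‖ ^ 2 = 1 + 2 * σ * ω.re + σ ^ 2 := by
      have hω2 : ω.re * ω.re + ω.im * ω.im = 1 := by
        have := Complex.sq_norm ω
        rw [hωn, Complex.normSq_apply] at this; linarith
      rw [Complex.sq_norm, Complex.normSq_apply]
      simp
      linear_combination σ ^ 2 * hω2
    rw [this]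
    nlinarith
  calc ‖P + b * h ^ (n+1) + R‖ ≤ ‖P * (1 + σ * ω)‖ + ‖R‖ := by rw [hkey]; exact norm_add_le _ _
    _ ≤ ‖P‖ * (1 - 4 / 9 * σ) + ‖P‖ * (10 / 81 * σ) := by
        rw [norm_mul]; gcongr
    _ ≤ ‖P‖ * (1 - σ / 4) := by nlinarith [mul_pos hP0 hσ0]
    _ = _ := by rw [hσ]; field_simp

lemma le_Amax (p : Polynomial ℂ) (z : ℂ) (j : ℕ) (hj : j ≤ p.natDegree) :
    ‖dEval p j z / (Nat.factorial j : ℂ)‖ ≤ Amax p z := by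
  have := Finset.le_sup' (f := fun j => ‖dEval p j z‖ / (Nat.factorial j : ℝ))
    (Finset.mem_range.mpr (Nat.lt_succ_of_le hj))
  rw [norm_div, Complex.norm_natCast]
  exact this

lemma kIndex_spec (p : Polynomial ℂ) (z : ℂ) (h : dEval p 3 z ≠ 0) :
    1 ≤ kIndex p z ∧ kIndex p z ≤ 3 ∧ dEval p (kIndex p z) z ≠ 0 ∧
      ∀ j, 1 ≤ j → j < kIndex p z → dEval p j z = 0 := by
  have hne : ({j : ℕ | 1 ≤ j ∧ dEval p j z ≠ 0}).Nonempty := ⟨3, by norm_num, h⟩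
  have h1 := Nat.sInf_mem hne
  refine ⟨h1.1, Nat.sInf_le ⟨by norm_num, h⟩, h1.2, fun j hj hlt => ?_⟩
  by_contra hc
  exact Nat.notMem_of_lt_sInf hlt ⟨hj, hc⟩

lemma taylor3 (a₃ a₂ a₁ a₀ : ℂ)
    (p : Polynomial ℂ) (hp : p = C a₃ * X ^ 3 + C a₂ * X ^ 2 + C a₁ * X + C a₀) (z h : ℂ) :
    dEval p 0 z = p.eval z ∧ dEval p 1 z = p.derivative.eval z ∧ dEval p 3 z = 6 * a₃ ∧
    p.eval (z + h) = p.eval z + dEval p 1 z / (Nat.factorial 1 : ℂ) * h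
      + dEval p 2 z / (Nat.factorial 2 : ℂ) * h ^ 2
      + dEval p 3 z / (Nat.factorial 3 : ℂ) * h ^ 3 := by
  refine ⟨rfl, rfl, ?_, ?_⟩
  · subst hp; simp [dEval, Nat.factorial]; ring
  · subst hp; simp [dEval, Nat.factorial]; ring

lemma core (a₃ a₂ a₁ a₀ : ℂ) (h3 : a₃ ≠ 0)
    (p : Polynomial ℂ) (hp : p = C a₃ * X ^ 3 + C a₂ * X ^ 2 + C a₁ * X + C a₀)
    (z : ℂ) (hz : p.eval z ≠ 0) (ρ : ℝ)
    (hρ : ρ = ‖p.eval z‖ * ‖dEval p (kIndex p z) z / (Nat.factorial (kIndex p z) : ℂ)‖) :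
    0 < ρ ∧ 0 < Amax p z ∧ ∃ r, ρ / (18 * Amax p z ^ 2) ≤ r ∧ r ≤ ρ / (9 * Amax p z ^ 2) ∧
      ‖RN p z - z‖ = r ∧
      ‖p.eval (RN p z)‖ ≤ ‖p.eval z‖ * (1 - r ^ (kIndex p z) * ρ / (4 * ‖p.eval z‖ ^ 2)) := by
  have hdeg : p.natDegree = 3 := by rw [hp]; exact natDegree_cubic h3
  have hd3 : dEval p 3 z ≠ 0 := by
    rw [(taylor3 a₃ a₂ a₁ a₀ p hp z 0).2.2.1]; simpa using h3
  obtain ⟨k1, k2, k3, k4⟩ := kIndex_spec p z hd3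
  have hA := fun j hj => le_Amax p z j (hdeg ▸ hj : j ≤ p.natDegree)
  unfold RN rniWith
  generalize kIndex p z = m at *
  have hfac : (Nat.factorial m : ℂ) ≠ 0 := by exact_mod_cast Nat.factorial_ne_zero m
  have hb : dEval p m z / (Nat.factorial m : ℂ) ≠ 0 := div_ne_zero k3 hfac
  have hP0 : 0 < ‖p.eval z‖ := norm_pos_iff.mpr hz
  have hb0 : 0 < ‖dEval p m z / (Nat.factorial m : ℂ)‖ := norm_pos_iff.mpr hb
  have hPA : ‖p.eval z‖ ≤ Amax p z := by
    have := hA 0 (by norm_num)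
    simpa [dEval] using this
  have hu : uPar p m z = p.eval z * (starRingEnd ℂ) (dEval p m z / (Nat.factorial m : ℂ)) := by
    unfold uPar; simp; field_simp
  have hun : ‖uPar p m z‖ = ρ := by rw [hu, hρ]; simp
  have hρ0 : 0 < ρ := by rw [hρ]; positivity
  have hu0 : uPar p m z ≠ 0 := by rw [← norm_pos_iff, hun]; exact hρ0
  obtain ⟨n, rfl⟩ : ∃ n, m = n + 1 := ⟨m - 1, by omega⟩
  refine ⟨hρ0, hP0.trans_le hPA, CPar p (n+1) z / 3, ?_⟩
  have hre := theta_re p (n+1) k1 z hu0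
  have hcb := c_bounds p (n+1) z
  rw [Nat.add_sub_cancel] at hre hcb
  obtain ⟨h, hh⟩ : ∃ h : ℂ, h = (↑(CPar p (n+1) z / 3) : ℂ) *
    (uPar p (n+1) z / (↑(‖uPar p (n+1) z‖) : ℂ)) *
    Complex.exp ((↑(thetaPar p (n+1) z) : ℂ) * Complex.I) := ⟨_, rfl⟩
  rw [← hh, add_sub_cancel_left]
  obtain ⟨R, hRe, hR⟩ : ∃ R : ℂ, p.eval (z + h) = p.eval z +
      dEval p (n+1) z / (Nat.factorial (n+1) : ℂ) * h ^ (n+1) + R ∧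
      ‖R‖ ≤ Amax p z * (‖h‖ ^ (n+2) + ‖h‖ ^ (n+3)) := by
    have ht := (taylor3 a₃ a₂ a₁ a₀ p hp z h).2.2.2
    have hAp : 0 ≤ Amax p z := hP0.le.trans hPA
    have hn : n = 0 ∨ n = 1 ∨ n = 2 := by omega
    rcases hn with rfl | rfl | rfl
    · refine ⟨dEval p 2 z / (Nat.factorial 2 : ℂ) * h ^ 2
        + dEval p 3 z / (Nat.factorial 3 : ℂ) * h ^ 3, by rw [ht]; ring, ?_⟩
      refine (norm_add_le _ _).trans ?_
      rw [norm_mul, norm_mul, norm_pow, norm_pow, mul_add]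
      have h2 := hA 2 (by norm_num)
      have h3 := hA 3 (by norm_num)
      gcongr
    · refine ⟨dEval p 3 z / (Nat.factorial 3 : ℂ) * h ^ 3, ?_, ?_⟩
      · rw [ht, k4 1 le_rfl (by norm_num)]; ring
      rw [norm_mul, norm_pow, mul_add]
      have h3 := hA 3 (by norm_num)
      have : 0 ≤ Amax p z * ‖h‖ ^ (1+3) := by positivity
      refine le_trans ?_ (le_add_of_nonneg_right this)
      gcongr
    · refine ⟨0, ?_, ?_⟩
      · rw [ht, k4 1 le_rfl (by norm_num), k4 2 (by norm_num) (by norm_num)]; ring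
      rw [norm_zero]; positivity
  have hD := descent (p.eval z) (dEval p (n+1) z / (Nat.factorial (n+1) : ℂ))
    (Complex.exp ((↑(thetaPar p (n+1) z) : ℂ) * Complex.I)) R (Amax p z) (cPar p (n+1) z) n
    hz hb hPA (hA _ k2) _ hu (Complex.norm_exp_ofReal_mul_I _) hre hcb.1 hcb.2
    (CPar p (n+1) z / 3) rfl h hh hR
  rw [← hRe, hun] at hD
  exact ⟨hD.2.1, hD.2.2.1, hD.1, hD.2.2.2⟩

lemma continuous_dEval (p : Polynomial ℂ) (j : ℕ) : Continuous (dEval p j) :=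
  (Polynomial.derivative^[j] p).continuous

lemma continuous_Amax (p : Polynomial ℂ) : Continuous (Amax p) := by
  unfold Amax
  apply Continuous.finset_sup'_apply
  intro j _
  exact (continuous_dEval p j).norm.div_const _

lemma isCompact_sub (p : Polynomial ℂ) (hd : 0 < p.degree) (K : ℝ) :
    IsCompact {z : ℂ | ‖p.eval z‖ ≤ K} := by
  have h1 : Tendsto (fun z => ‖p.eval z‖) (cocompact ℂ) atTop :=
    p.tendsto_norm_atTop hd (tendsto_norm_cocompact_atTop)
  have h2 := h1.eventually_gt_atTop K
  rw [Filter.Eventually, mem_cocompact'] at h2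
  obtain ⟨t, ht, hs⟩ := h2
  refine ht.of_isClosed_subset (isClosed_le p.continuous.norm continuous_const) ?_
  intro z hz
  apply hs
  simpa using hz

/-- **Solving cubics via RNM.** Let `p(z) = a₃z³ + a₂z² + a₁z + a₀` with `a₃ ≠ 0` and let
`c` be a critical point of `p` of smallest polynomial modulus among all critical points.
Then the RNM orbit of `c` converges to a root of `p`. -/
theorem rnm_cubic (a₃ a₂ a₁ a₀ : ℂ) (h3 : a₃ ≠ 0)
    (p : Polynomial ℂ) (hp : p = C a₃ * X ^ 3 + C a₂ * X ^ 2 + C a₁ * X + C a₀)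
    (c : ℂ) (hc : p.derivative.eval c = 0)
    (hmin : ∀ w : ℂ, p.derivative.eval w = 0 →
      ‖p.eval c‖ ≤ ‖p.eval w‖) :
    ∃ θstar : ℂ, p.eval θstar = 0 ∧
      Filter.Tendsto (rnmOrbit p c) Filter.atTop (nhds θstar) := by
  have hdeg : p.natDegree = 3 := by rw [hp]; exact natDegree_cubic h3
  have hdeg0 : 0 < p.degree := by
    rw [← natDegree_pos_iff_degree_pos]; omega
  have hstrict : ∀ z, p.eval z ≠ 0 → ‖p.eval (RN p z)‖ < ‖p.eval z‖ := by
    intro z hz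
    obtain ⟨hρ, hA, r, h1, h2, h3, h4⟩ := core a₃ a₂ a₁ a₀ h3 p hp z hz _ rfl
    have hP0 : 0 < ‖p.eval z‖ := norm_pos_iff.mpr hz
    have hr : 0 < r := lt_of_lt_of_le (div_pos hρ (by positivity)) h1
    refine h4.trans_lt ?_
    have := div_pos (mul_pos (pow_pos hr (kIndex p z)) hρ)
      (by positivity : 0 < 4 * ‖p.eval z‖ ^ 2)
    nlinarith
  by_cases hc0 : p.eval c = 0
  · refine ⟨c, hc0, ?_⟩
    have : rnmOrbit p c = fun _ => c := by
      funext t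
      induction t with
      | zero => rfl
      | succ t ih => simp [rnmOrbit, ih, hc0]
    rw [this]; exact tendsto_const_nhds
  have hz1 : rnmOrbit p c 1 = RN p c := by simp [rnmOrbit, hc0]
  obtain ⟨K, hK⟩ : ∃ K, K = ‖p.eval (RN p c)‖ := ⟨_, rfl⟩
  have hKc : K < ‖p.eval c‖ := hK ▸ hstrict c hc0
  have hS := isCompact_sub p hdeg0 K
  have hd1 : ∀ z, ‖p.eval z‖ ≤ K → dEval p 1 z ≠ 0 := fun z hz h =>
    absurd (hmin z h) (not_le.mpr (hz.trans_lt hKc))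
  have hApos : ∀ z, ‖a₃‖ ≤ Amax p z := by
    intro z
    have := le_Amax p z 3 hdeg.ge
    rw [(taylor3 a₃ a₂ a₁ a₀ p hp z 0).2.2.1] at this
    simpa [Nat.factorial] using this
  have ha3 : 0 < ‖a₃‖ := norm_pos_iff.mpr h3
  obtain ⟨x, hxS, hx⟩ := hS.exists_isMinOn ⟨RN p c, hK.ge⟩
    (f := fun z => ‖dEval p 1 z‖ ^ 2 / (72 * Amax p z ^ 2)) (by
      apply Continuous.continuousOn
      apply Continuous.div
      · exact (continuous_dEval p 1).norm.pow 2
      · exact ((continuous_Amax p).pow 2).const_mul 72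
      · intro z
        have := ha3.trans_le (hApos z)
        positivity)
  obtain ⟨ε, hε⟩ : ∃ ε, ε = ‖dEval p 1 x‖ ^ 2 / (72 * Amax p x ^ 2) := ⟨_, rfl⟩
  have hε0 : 0 < ε := by
    rw [hε]
    have h1 := ha3.trans_le (hApos x)
    have h2 := norm_pos_iff.mpr (hd1 x hxS)
    positivity
  have hstep : ∀ z, p.eval z ≠ 0 → ‖p.eval z‖ ≤ K →
      ‖p.eval (RN p z)‖ ≤ (1 - ε) * ‖p.eval z‖ ∧
      ‖RN p z - z‖ ≤ ‖p.eval z‖ * (1 / (9 * ‖a₃‖)) := by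
    intro z hz hzK
    have hP0 : 0 < ‖p.eval z‖ := norm_pos_iff.mpr hz
    have hk : kIndex p z = 1 := by
      have h := hd1 z hzK
      have h1 : kIndex p z ≤ 1 := Nat.sInf_le ⟨le_rfl, h⟩
      have h2 : kIndex p z ∈ {j : ℕ | 1 ≤ j ∧ dEval p j z ≠ 0} := Nat.sInf_mem ⟨1, le_rfl, h⟩
      exact le_antisymm h1 h2.1
    obtain ⟨hρ, hA, r, h1, h2, h3, h4⟩ := core a₃ a₂ a₁ a₀ h3 p hp z hz _ rfl
    have hdA := le_Amax p z 1 (by omega)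
    rw [hk] at hρ h1 h2 h4
    simp only [Nat.factorial_one, Nat.cast_one, div_one, pow_one] at hρ h1 h2 h4 hdA
    constructor
    · refine h4.trans ?_
      rw [mul_comm]
      gcongr
      have hm : ε ≤ ‖dEval p 1 z‖ ^ 2 / (72 * Amax p z ^ 2) := by
        rw [hε]; exact hx hzK
      refine hm.trans ?_
      calc ‖dEval p 1 z‖ ^ 2 / (72 * Amax p z ^ 2)
          = (‖p.eval z‖ * ‖dEval p 1 z‖ / (18 * Amax p z ^ 2)) *
            (‖p.eval z‖ * ‖dEval p 1 z‖) / (4 * ‖p.eval z‖ ^ 2) := by field_simp; ring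
        _ ≤ _ := by gcongr
    · rw [h3]
      refine h2.trans ?_
      rw [mul_div_assoc]
      apply mul_le_mul_of_nonneg_left _ hP0.le
      calc ‖dEval p 1 z‖ / (9 * Amax p z ^ 2) ≤ Amax p z / (9 * Amax p z ^ 2) := by gcongr
        _ = 1 / (9 * Amax p z) := by field_simp
        _ ≤ _ := by gcongr; exact hApos z
  obtain ⟨q, hq⟩ : ∃ q, q = max (1 - ε) 0 := ⟨_, rfl⟩
  have hq0 : 0 ≤ q := hq ▸ le_max_right _ _
  have hq1 : q < 1 := by rw [hq]; exact max_lt (by linarith) one_pos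
  have hqe : 1 - ε ≤ q := hq ▸ le_max_left _ _
  have hK0 : 0 ≤ K := hK ▸ norm_nonneg _
  have horb : ∀ t, ‖p.eval (rnmOrbit p c (t+1))‖ ≤ K * q ^ t := by
    intro t
    induction t with
    | zero => rw [zero_add, hz1, hK]; simp
    | succ t ih =>
      rw [rnmOrbit]
      split_ifs with h
      · rw [h, norm_zero]; positivity
      · have hle : K * q ^ t ≤ K := mul_le_of_le_one_right hK0 (pow_le_one₀ hq0 hq1.le)
        refine (hstep _ h (ih.trans hle)).1.trans ?_
        calc _ ≤ q * (K * q ^ t) := by gcongr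
          _ = _ := by ring
  have hdist : ∀ t, dist (rnmOrbit p c (t+1)) (rnmOrbit p c (t+1+1)) ≤
      (K * (1 / (9 * ‖a₃‖))) * q ^ t := by
    intro t
    rw [dist_comm, dist_eq_norm, rnmOrbit.eq_def p c (t+1+1)]
    dsimp only
    split_ifs with h
    · rw [sub_self, norm_zero]; positivity
    · have hle : K * q ^ t ≤ K := mul_le_of_le_one_right hK0 (pow_le_one₀ hq0 hq1.le)
      refine (hstep _ h ((horb t).trans hle)).2.trans ?_
      calc _ ≤ (K * q ^ t) * (1 / (9 * ‖a₃‖)) := by gcongr; exact horb t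
        _ = _ := by ring
  have hcau : CauchySeq (fun t => rnmOrbit p c (t+1)) :=
    cauchySeq_of_le_geometric q _ hq1 hdist
  obtain ⟨y, hy⟩ := cauchySeq_tendsto_of_complete hcau
  refine ⟨y, ?_, (tendsto_add_atTop_iff_nat 1).mp hy⟩
  have h1 : Tendsto (fun t => ‖p.eval (rnmOrbit p c (t+1))‖) atTop (𝓝 ‖p.eval y‖) :=
    ((p.continuous.norm).tendsto y).comp hy
  have h2 : Tendsto (fun t => ‖p.eval (rnmOrbit p c (t+1))‖) atTop (𝓝 0) := by
    refine squeeze_zero (fun _ => norm_nonneg _) horb ?_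
    simpa using (tendsto_pow_atTop_nhds_zero_of_lt_one hq0 hq1).const_mul K
  exact norm_eq_zero.mp (tendsto_nhds_unique h1 h2)
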